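/- The multiset union of the adjacency spectrum of the star graph X_3 with two copies of the spectrum of K_4 equals the multiset union of the spectrum of the cube graph with two copies of the spectrum of the truncated tetrahedron graph. -/

import Mathlib

open Equiv Equiv.Perm Polynomial
open scoped Classical

/-- The star graph `X_3 = Cay(S_4, {(1,4),(2,4),(3,4)})`. -/
def starGraph3 : SimpleGraph (Equiv.Perm (Fin 4)) :=
  SimpleGraph.fromRel (fun ξ η =>
    ∃ i : Fin 3, η = ξ * Equiv.swap (Fin.castSucc i) (Fin.last 3))

/-- The cube graph `Q_3`: vertices are `{0,1}^3`, adjacent iff they differ in exactly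
one coordinate. -/
def cubeGraph : SimpleGraph (Fin 3 → Bool) :=
  SimpleGraph.fromRel (fun x y =>
    (Finset.univ.filter fun i : Fin 3 => x i ≠ y i).card = 1)

/-- The truncated tetrahedron graph, realized as the quotient of `X_3` by the right
action of `⟨(1,2)⟩`: vertices are the left cosets, adjacency is induced from `X_3`. -/
def truncT : SimpleGraph
    (Equiv.Perm (Fin 4) ⧸ Subgroup.zpowers (Equiv.swap (0 : Fin 4) 1)) :=
  SimpleGraph.fromRel (fun a b =>
    ∃ ξ η : Equiv.Perm (Fin 4),
      (ξ : Equiv.Perm (Fin 4) ⧸ Subgroup.zpowers (Equiv.swap (0 : Fin 4) 1)) = a ∧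
      (η : Equiv.Perm (Fin 4) ⧸ Subgroup.zpowers (Equiv.swap (0 : Fin 4) 1)) = b ∧
      starGraph3.Adj ξ η)

/-- The adjacency spectrum (the multiset of real roots of the characteristic polynomial
of the adjacency matrix) of a finite graph. -/
noncomputable def adjSpectrum {V : Type*} [Fintype V] (G : SimpleGraph V) :
    Multiset ℝ :=
  (SimpleGraph.adjMatrix ℝ G).charpoly.roots

/-! Each adjacency matrix is diagonalised over `ℤ` by an explicit orthogonal system of
eigenvectors (Gelfand-Tsetlin vectors for the star graph). For each graph we list the neighbour
lists `N`, the eigenvalues `D` and the eigenvectors `P`. -/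

namespace SpectraAux

def starN : List (List Nat) := [[18, 4, 1], [13, 3, 0], [20, 5, 3], [9, 1, 2], [10, 0, 5], [17, 2, 4], [22, 10, 7], [15, 9, 6], [21, 11, 9], [3, 7, 8], [4, 6, 11], [16, 8, 10], [19, 16, 13], [1, 15, 12], [23, 17, 15], [7, 13, 14], [11, 12, 17], [5, 14, 16], [0, 22, 19], [12, 21, 18], [2, 23, 21], [8, 19, 20], [6, 18, 23], [14, 20, 22]]
def starD : List Int := [-3, -2, -2, -2, -2, -2, -2, -1, -1, -1, 0, 0, 0, 0, 1, 1, 1, 2, 2, 2, 2, 2, 2, 3]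
def starP : List (List Int) :=
  [[-1, 1, 1, -1, 1, -1, 1, -1, -1, 1, -1, 1, 1, -1, -1, 1, -1, 1, 1, -1, -1, 1, -1, 1],
   [2, -2, -1, 1, -1, 1, 2, -2, -1, 1, -1, 1, -1, 1, -1, 1, 0, 0, -1, 1, 0, 0, -1, 1],
   [0, 0, -3, 3, -1, 1, 0, 0, 3, -3, 1, -1, 3, -3, -3, 3, -2, 2, 1, -1, 2, -2, -1, 1],
   [0, 0, 0, 0, -1, 1, 0, 0, 0, 0, 1, -1, 0, 0, 0, 0, 1, -1, 1, -1, -1, 1, -1, 1],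
   [0, 0, 3, -1, 1, -3, 0, 0, 3, -1, 1, -3, -3, 1, -3, 1, 2, 2, -1, 3, -2, -2, -1, 3],
   [6, -2, 3, -1, -5, -1, -6, 2, -3, 1, 5, 1, 3, -1, -3, 1, -4, 4, -5, -1, -4, 4, 5, 1],
   [0, -2, 0, 2, 1, -1, 0, 2, 0, -2, -1, 1, 0, 2, 0, -2, -1, 1, 1, -1, -1, 1, -1, 1],
   [-3, 1, -3, 1, 1, 1, -3, 1, -3, 1, 1, 1, -3, 1, -3, 1, 1, 1, 1, 1, 1, 1, 1, 1],
   [0, 2, 0, -1, -1, 2, 0, 2, 0, -1, -1, 2, 0, -1, 0, -1, -1, -1, -1, 2, -1, -1, -1, 2],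
   [0, 0, 0, 1, 1, 0, 0, 0, 0, -1, -1, 0, 0, -1, 0, 1, 1, -1, -1, 0, -1, 1, 1, 0],
   [-2, -2, 1, 1, 1, 1, -2, -2, 1, 1, 1, 1, 1, 1, 1, 1, -2, -2, 1, 1, -2, -2, 1, 1],
   [0, 0, -1, -1, 1, 1, 0, 0, 1, 1, -1, -1, 1, 1, -1, -1, 0, 0, -1, -1, 0, 0, 1, 1],
   [0, 0, -1, 1, 1, -1, 0, 0, -1, 1, 1, -1, 1, -1, 1, -1, 0, 0, -1, 1, 0, 0, -1, 1],
   [2, -2, 1, -1, 1, -1, -2, 2, -1, 1, -1, 1, 1, -1, -1, 1, 2, -2, 1, -1, 2, -2, -1, 1],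
   [0, 0, 0, 1, -1, 0, 0, 0, 0, 1, -1, 0, 0, -1, 0, -1, 1, 1, 1, 0, -1, -1, 1, 0],
   [0, 2, 0, 1, -1, -2, 0, -2, 0, -1, 1, 2, 0, 1, 0, -1, 1, -1, -1, -2, 1, -1, 1, 2],
   [3, 1, -3, -1, 1, -1, -3, -1, 3, 1, -1, 1, -3, -1, 3, 1, -1, 1, 1, -1, -1, 1, -1, 1],
   [0, -2, 0, -2, 1, 1, 0, -2, 0, -2, 1, 1, 0, -2, 0, -2, 1, 1, 1, 1, 1, 1, 1, 1],
   [-6, -2, 3, 1, -5, 1, -6, -2, 3, 1, -5, 1, 3, 1, 3, 1, 4, 4, -5, 1, 4, 4, -5, 1],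
   [0, 0, 3, 1, 1, 3, 0, 0, -3, -1, -1, -3, -3, -1, 3, 1, -2, 2, -1, -3, 2, -2, 1, 3],
   [0, 0, 0, 0, -1, -1, 0, 0, 0, 0, -1, -1, 0, 0, 0, 0, -1, -1, 1, 1, 1, 1, 1, 1],
   [0, 0, -3, -3, -1, -1, 0, 0, -3, -3, -1, -1, 3, 3, 3, 3, 2, 2, 1, 1, -2, -2, 1, 1],
   [-2, -2, -1, -1, -1, -1, 2, 2, 1, 1, 1, 1, -1, -1, 1, 1, 0, 0, -1, -1, 0, 0, 1, 1],
   [1, 1, 1, 1, 1, 1, 1, 1, 1, 1, 1, 1, 1, 1, 1, 1, 1, 1, 1, 1, 1, 1, 1, 1]]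
def truncR : List Nat := [0, 1, 2, 3, 4, 5, 8, 9, 10, 11, 16, 17]
def truncC : List Nat := [0, 1, 2, 3, 4, 5, 0, 1, 6, 7, 8, 9, 6, 7, 2, 3, 10, 11, 8, 9, 11, 10, 4, 5]
def truncN : List (List Nat) := [[8, 4, 1], [7, 3, 0], [11, 5, 3], [7, 1, 2], [8, 0, 5], [11, 2, 4], [10, 9, 7], [3, 1, 6], [4, 0, 9], [10, 6, 8], [9, 6, 11], [5, 2, 10]]
def truncD : List Int := [-2, -2, -2, -1, -1, -1, 0, 0, 2, 2, 2, 3]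
def truncP : List (List Int) :=
  [[2, -2, -1, 1, -1, 1, -1, 1, -1, 1, 0, 0],
   [0, 0, -3, 3, -1, 1, 3, -3, 1, -1, -2, 2],
   [0, 0, 0, 0, -1, 1, 0, 0, 1, -1, 1, -1],
   [-3, 1, -3, 1, 1, 1, -3, 1, 1, 1, 1, 1],
   [0, 2, 0, -1, -1, 2, 0, -1, -1, 2, -1, -1],
   [0, 0, 0, 1, 1, 0, 0, -1, -1, 0, 1, -1],
   [-2, -2, 1, 1, 1, 1, 1, 1, 1, 1, -2, -2],
   [0, 0, -1, -1, 1, 1, 1, 1, -1, -1, 0, 0],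
   [0, -2, 0, -2, 1, 1, 0, -2, 1, 1, 1, 1],
   [-6, -2, 3, 1, -5, 1, 3, 1, -5, 1, 4, 4],
   [0, 0, 3, 1, 1, 3, -3, -1, -1, -3, -2, 2],
   [1, 1, 1, 1, 1, 1, 1, 1, 1, 1, 1, 1]]
def cubeD : List Int := [3, 1, 1, -1, 1, -1, -1, -3]
def cubeP : List (List Int) :=
  [[1, 1, 1, 1, 1, 1, 1, 1],
   [1, -1, 1, -1, 1, -1, 1, -1],
   [1, 1, -1, -1, 1, 1, -1, -1],
   [1, -1, -1, 1, 1, -1, -1, 1],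
   [1, 1, 1, 1, -1, -1, -1, -1],
   [1, -1, 1, -1, -1, 1, -1, 1],
   [1, 1, -1, -1, -1, -1, 1, 1],
   [1, -1, -1, 1, -1, 1, 1, -1]]
def cubeN : List (List Nat) := [[1, 2, 4], [0, 3, 5], [3, 0, 6], [2, 1, 7], [5, 6, 0], [4, 7, 1], [7, 4, 2], [6, 5, 3]]
def tetraD : List Int := [3, -1, -1, -1]
def tetraP : List (List Int) :=
  [[1, 1, 1, 1],
   [1, -1, 0, 0],
   [1, 1, -2, 0],
   [1, 1, 1, -3]]
def tetraN : List (List Nat) := [[1, 2, 3], [0, 2, 3], [0, 1, 3], [0, 1, 2]]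

/-- The entry of a table of eigenvectors. -/
def ent (P : List (List Int)) (k i : ℕ) : Int := (P.getD k []).getD i 0

theorem spec_of {n : ℕ} {V : Type*} [Fintype V] (G : SimpleGraph V) (e : Fin n ≃ V)
    (N : List (List Nat)) (D : List Int) (P : List (List Int))
    (hadj : ∀ i j : Fin n, G.Adj (e i) (e j) ↔ j.val ∈ N.getD i.val [])
    (hEig : ∀ k i : Fin n,
      ∑ j : Fin n, (if i.val ∈ N.getD j.val [] then ent P k j else 0) = D.getD k 0 * ent P k i)
    (hOrth : ∀ k l : Fin n, (∑ j : Fin n, ent P k j * ent P l j = 0) ↔ k ≠ l) :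
    adjSpectrum G =
      ((Finset.univ : Finset (Fin n)).val.map (fun k => D.getD k.val 0)).map
        (Int.cast : ℤ → ℝ) := by
  unfold adjSpectrum
  rw [← Matrix.charpoly_reindex e.symm]
  set A : Matrix (Fin n) (Fin n) ℝ := Matrix.reindex e.symm e.symm (G.adjMatrix ℝ) with hA
  have hAij : ∀ i j, A i j = if j.val ∈ N.getD i.val [] then 1 else 0 := by
    intro i j
    simp only [hA, Matrix.reindex_apply, Matrix.submatrix_apply, Equiv.symm_symm,
      SimpleGraph.adjMatrix_apply, hadj]
  let M : Matrix (Fin n) (Fin n) ℝ := Matrix.of fun k i => (ent P k i : ℝ)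
  let d : Fin n → ℝ := fun k => ((D.getD k.val 0 : ℤ) : ℝ)
  let g : Fin n → ℝ := fun k => ((∑ j : Fin n, ent P k j * ent P k j : ℤ) : ℝ)
  have hg : ∀ k, g k ≠ 0 := by
    intro k h
    have h' : (∑ j : Fin n, ent P k j * ent P k j) = 0 := Int.cast_eq_zero.1 h
    exact (hOrth k k).1 h' rfl
  have h1 : M * A = Matrix.diagonal d * M := by
    ext k i
    rw [Matrix.diagonal_mul, Matrix.mul_apply]
    have := congrArg (Int.cast : ℤ → ℝ) (hEig k i)
    push_cast at this
    simp only [hAij, M, d, Matrix.of_apply, mul_ite, mul_one, mul_zero]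
    exact this
  have h2 : M * M.transpose = Matrix.diagonal g := by
    ext k l
    rw [Matrix.mul_apply, Matrix.diagonal_apply]
    split_ifs with h
    · subst h
      simp [M, g]
    · have := congrArg (Int.cast : ℤ → ℝ) ((hOrth k l).2 h)
      push_cast at this
      simpa [M] using this
  have hM : IsUnit M := by
    rw [Matrix.isUnit_iff_isUnit_det, isUnit_iff_ne_zero]
    intro h0
    have := congrArg Matrix.det h2
    rw [Matrix.det_mul, h0, zero_mul, Matrix.det_diagonal] at this
    exact Finset.prod_ne_zero_iff.2 (fun k _ => hg k) this.symm
  obtain ⟨u, hu⟩ := hM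
  have h3 : A = (u⁻¹).val * Matrix.diagonal d * u.val := by
    rw [mul_assoc, hu, ← h1, ← hu, ← mul_assoc, Units.inv_mul, one_mul]
  rw [h3, Matrix.coe_units_inv, Matrix.charpoly_units_conj', Matrix.charpoly_diagonal, Polynomial.roots_prod]
  · simp only [Polynomial.roots_X_sub_C, Multiset.bind_singleton, Multiset.map_map]
    rfl
  · exact Finset.prod_ne_zero_iff.2 fun k _ => Polynomial.X_sub_C_ne_zero _

/-- Enumeration of `S_4`. -/
def enumS (i : Fin 24) : Equiv.Perm (Fin 4) :=
  Equiv.swap 0 (Fin.ofNat 4 (i.val / 6)) * Equiv.swap 1 (Fin.ofNat 4 (1 + (i.val / 2) % 3)) *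
    Equiv.swap 2 (Fin.ofNat 4 (2 + i.val % 2))

theorem enumS_inj : Function.Injective enumS := by
  unfold Function.Injective
  decide +kernel

theorem enumS_bij : Function.Bijective enumS :=
  (Fintype.bijective_iff_injective_and_card _).2 ⟨enumS_inj, by
    simp [Fintype.card_perm, Nat.factorial]⟩

theorem star_adj (i j : Fin 24) :
    starGraph3.Adj (enumS i) (enumS j) ↔ j.val ∈ starN.getD i.val [] := by
  unfold starGraph3
  rw [SimpleGraph.fromRel_adj]
  revert i j
  decide +kernel

theorem star_spec : adjSpectrum starGraph3 =
    ((Finset.univ : Finset (Fin 24)).val.map (fun k => starD.getD k.val 0)).map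
        (Int.cast : ℤ → ℝ) :=
  spec_of _ (Equiv.ofBijective enumS enumS_bij) starN starD starP star_adj
    (by decide +kernel) (by decide +kernel)

/-- Representatives of the cosets of `⟨(1,2)⟩`. -/
def rep (i : Fin 12) : Fin 24 := Fin.ofNat 24 (truncR.getD i.val 0)

/-- The coset of an element of the enumeration. -/
def cod (i : Fin 24) : Fin 12 := Fin.ofNat 12 (truncC.getD i.val 0)

theorem mem_H (x : Equiv.Perm (Fin 4)) :
    x ∈ Subgroup.zpowers (Equiv.swap (0 : Fin 4) 1) ↔ x = 1 ∨ x = Equiv.swap 0 1 := by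
  constructor
  · rintro ⟨k, rfl⟩
    have h2 : (Equiv.swap (0 : Fin 4) 1) ^ (2 : ℤ) = 1 := by decide +kernel
    rcases Int.even_or_odd' k with ⟨m, rfl | rfl⟩
    · left
      simp only [zpow_mul, h2, one_zpow]
    · right
      simp only [zpow_add, zpow_mul, h2, one_zpow, zpow_one, one_mul]
  · rintro (rfl | rfl)
    · exact Subgroup.one_mem _
    · exact Subgroup.mem_zpowers _

theorem mk_eq (i j : Fin 24) :
    ((enumS i : Equiv.Perm (Fin 4)) : Equiv.Perm (Fin 4) ⧸
      Subgroup.zpowers (Equiv.swap (0 : Fin 4) 1)) = enumS j ↔ cod i = cod j := by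
  rw [QuotientGroup.eq, mem_H]
  revert i j
  decide +kernel

/-- Enumeration of the cosets. -/
def enumT (i : Fin 12) : Equiv.Perm (Fin 4) ⧸ Subgroup.zpowers (Equiv.swap (0 : Fin 4) 1) :=
  ((enumS (rep i) : Equiv.Perm (Fin 4)) : Equiv.Perm (Fin 4) ⧸
    Subgroup.zpowers (Equiv.swap (0 : Fin 4) 1))

theorem cod_rep : ∀ i, cod (rep i) = i := by decide +kernel

theorem enumT_bij : Function.Bijective enumT := by
  constructor
  · intro i j h
    have := (mk_eq _ _).1 h
    rwa [cod_rep, cod_rep] at this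
  · intro q
    induction q using QuotientGroup.induction_on with
    | H x =>
      obtain ⟨i, rfl⟩ := enumS_bij.2 x
      exact ⟨cod i, (mk_eq _ _).2 (cod_rep _)⟩

theorem trunc_table : ∀ i j : Fin 12,
    (i ≠ j ∧ ((∃ a b : Fin 24, cod a = i ∧ cod b = j ∧ b.val ∈ starN.getD a.val []) ∨
      (∃ a b : Fin 24, cod a = j ∧ cod b = i ∧ b.val ∈ starN.getD a.val []))) ↔
      j.val ∈ truncN.getD i.val [] := by
  decide +kernel

theorem trunc_rel (i j : Fin 12) :
    (∃ ξ η : Equiv.Perm (Fin 4),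
      (ξ : Equiv.Perm (Fin 4) ⧸ Subgroup.zpowers (Equiv.swap (0 : Fin 4) 1)) = enumT i ∧
      (η : Equiv.Perm (Fin 4) ⧸ Subgroup.zpowers (Equiv.swap (0 : Fin 4) 1)) = enumT j ∧
      starGraph3.Adj ξ η) ↔
    ∃ a b : Fin 24, cod a = i ∧ cod b = j ∧ b.val ∈ starN.getD a.val [] := by
  rw [enumS_bij.2.exists]
  refine exists_congr fun a => ?_
  rw [enumS_bij.2.exists]
  refine exists_congr fun b => ?_
  rw [enumT, enumT, mk_eq, mk_eq, cod_rep, cod_rep, star_adj]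

theorem trunc_adj (i j : Fin 12) :
    truncT.Adj (enumT i) (enumT j) ↔ j.val ∈ truncN.getD i.val [] := by
  unfold truncT
  rw [SimpleGraph.fromRel_adj, trunc_rel, trunc_rel, enumT_bij.1.ne_iff]
  exact trunc_table i j

theorem trunc_spec [Fintype (Equiv.Perm (Fin 4) ⧸ Subgroup.zpowers (Equiv.swap (0 : Fin 4) 1))] :
    adjSpectrum truncT =
    ((Finset.univ : Finset (Fin 12)).val.map (fun k => truncD.getD k.val 0)).map
        (Int.cast : ℤ → ℝ) :=
  spec_of _ (Equiv.ofBijective enumT enumT_bij) truncN truncD truncP trunc_adj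
    (by decide +kernel) (by decide +kernel)

/-- Enumeration of the vertices of the cube. -/
def enumQ (i : Fin 8) : Fin 3 → Bool := fun k => i.val.testBit k.val

theorem enumQ_bij : Function.Bijective enumQ :=
  (Fintype.bijective_iff_injective_and_card _).2 ⟨by
    unfold Function.Injective
    decide +kernel, by simp⟩

theorem cube_adj (i j : Fin 8) :
    cubeGraph.Adj (enumQ i) (enumQ j) ↔ j.val ∈ cubeN.getD i.val [] := by
  unfold cubeGraph
  rw [SimpleGraph.fromRel_adj]
  have key : ∀ i j : Fin 8, (enumQ i ≠ enumQ j ∧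
      ((Finset.univ.filter fun k : Fin 3 => enumQ i k ≠ enumQ j k).card = 1 ∨
       (Finset.univ.filter fun k : Fin 3 => enumQ j k ≠ enumQ i k).card = 1)) ↔
      j.val ∈ cubeN.getD i.val [] := by
    decide +kernel
  convert key i j

theorem cube_spec : adjSpectrum cubeGraph =
    ((Finset.univ : Finset (Fin 8)).val.map (fun k => cubeD.getD k.val 0)).map
        (Int.cast : ℤ → ℝ) :=
  spec_of _ (Equiv.ofBijective enumQ enumQ_bij) cubeN cubeD cubeP cube_adj
    (by decide +kernel) (by decide +kernel)

theorem tetra_spec : adjSpectrum (⊤ : SimpleGraph (Fin 4)) =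
    ((Finset.univ : Finset (Fin 4)).val.map (fun k => tetraD.getD k.val 0)).map
        (Int.cast : ℤ → ℝ) :=
  spec_of _ (Equiv.refl _) tetraN tetraD tetraP
    (by
      intro i j
      rw [SimpleGraph.top_adj]
      revert i j
      decide +kernel)
    (by decide +kernel) (by decide +kernel)

end SpectraAux

/-- `Spec(X_3) ∪ Spec(K_4) ∪ Spec(K_4) = Spec(Q) ∪ Spec(T) ∪ Spec(T)` as multisets. -/
theorem spectra_multiset_relation :
    adjSpectrum starGraph3 + adjSpectrum (⊤ : SimpleGraph (Fin 4))
        + adjSpectrum (⊤ : SimpleGraph (Fin 4)) =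
      adjSpectrum cubeGraph + adjSpectrum truncT + adjSpectrum truncT := by
  rw [SpectraAux.star_spec, SpectraAux.tetra_spec, SpectraAux.cube_spec, SpectraAux.trunc_spec]
  simp only [← Multiset.map_add]
  congr 1
  decide +kernel
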